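/- With $K$ as in the context and $G(x,y) = \frac12 x^2 + \frac12 (y-\Lambda_3)^2$, one has $K(x,y) < G(x,y)$ for all $x \in \mathbb{R}$ and all $y > 0$. -/

import Mathlib

/-- The Kepler effective Hamiltonian `H₂(y) = -1/(2y²) - y`. -/
noncomputable def H2K (y : ℝ) : ℝ := -(1 / (2 * y ^ 2)) - y

/-- `F(x,y) = ½(y - Λ₃)² - cos(x/2) + B`. -/
noncomputable def Ffun (Λ3 B : ℝ) (x y : ℝ) : ℝ :=
  (y - Λ3) ^ 2 / 2 - Real.cos (x / 2) + B

/-- The interpolated function `K(x,y) = (1 - f(y)) H₂(y) + f(y) F(x,y)`. -/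
noncomputable def Kfun (Λ3 B : ℝ) (f : ℝ → ℝ) (x y : ℝ) : ℝ :=
  (1 - f y) * H2K y + f y * Ffun Λ3 B x y

/-- `G(x,y) = ½x² + ½(y - Λ₃)²`. -/
noncomputable def Gfun (Λ3 : ℝ) (x y : ℝ) : ℝ := x ^ 2 / 2 + (y - Λ3) ^ 2 / 2

/-!
`K(x, y)` is a convex combination of `H₂(y)` and `F(x, y)`, so it suffices that both lie below
`G(x, y)`. For `H₂` this is a matter of signs: `H₂ < 0 ≤ G`. For `F`, the difference is
`G - F = ½x² + cos(x/2) - B`, and `½x² + cos(x/2) ≥ 1 + ⅜x² ≥ 1`, so `B < 1` is enough.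
The assumption on `B` says that the maximum over `x` of `F(x, y)`, attained where
`cos(x/2) = -1`, is at most `H₂(y)`, which is negative; hence even `B < -1`.
-/

section

variable {Λ3 B x y : ℝ}

theorem H2K_neg (hy : 0 < y) : H2K y < 0 := by
  have kepler_pos : 0 < 1 / (2 * y ^ 2) := by positivity
  unfold H2K
  linarith

theorem Gfun_nonneg : 0 ≤ Gfun Λ3 x y := by
  unfold Gfun
  positivity

theorem H2K_lt_Gfun (hy : 0 < y) : H2K y < Gfun Λ3 x y :=
  (H2K_neg hy).trans_le Gfun_nonneg

theorem Ffun_lt_Gfun (hB : B < 1) : Ffun Λ3 B x y < Gfun Λ3 x y := by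
  have cos_bound : 1 - (x / 2) ^ 2 / 2 ≤ Real.cos (x / 2) := Real.one_sub_sq_div_two_le_cos
  unfold Ffun Gfun
  linarith [sq_nonneg x]

theorem Kfun_lt_of_H2K_lt_of_Ffun_lt {f : ℝ → ℝ} {c : ℝ} (hfy : f y ∈ Set.Icc (0 : ℝ) 1)
    (hH : H2K y < c) (hF : Ffun Λ3 B x y < c) : Kfun Λ3 B f x y < c :=
  convex_Iio c hH hF (sub_nonneg.2 hfy.2) hfy.1 (sub_add_cancel 1 (f y))

theorem lt_neg_one_of_transition_bound (hy : 0 < y)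
    (h : (y - Λ3) ^ 2 / 2 + B + 1 + 1 / (2 * y ^ 2) + y ≤ 0) : B < -1 := by
  have Ffun_max_le_H2K : (y - Λ3) ^ 2 / 2 + B + 1 ≤ H2K y := by
    unfold H2K
    linarith
  linarith [H2K_neg hy, sq_nonneg (y - Λ3)]

theorem stmt_10_general {f : ℝ → ℝ} (hB : B < 1) (hfy : f y ∈ Set.Icc (0 : ℝ) 1) (hy : 0 < y) :
    Kfun Λ3 B f x y < Gfun Λ3 x y :=
  Kfun_lt_of_H2K_lt_of_Ffun_lt hfy (H2K_lt_Gfun hy) (Ffun_lt_Gfun hB)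

end

/-- The key inequality of Section 5.3 of the paper: `K(x,y) < G(x,y)` for all `x ∈ ℝ`
and `y > 0`. -/
theorem stmt_10 (Λ2 Λ3 ε0 B : ℝ) (f : ℝ → ℝ)
    (hΛ2 : 1 < Λ2) (hΛ23 : Λ2 < Λ3)
    (hε0 : 0 < ε0) (hε0' : ε0 < (Λ3 - Λ2) / 2)
    (hB : ∀ y ∈ Set.Icc (Λ2 + ε0) (Λ2 + 2 * ε0),
      (y - Λ3) ^ 2 / 2 + B + 1 + 1 / (2 * y ^ 2) + y ≤ 0)
    (hf : ContDiff ℝ (⊤ : ℕ∞) f) (hfmono : Monotone f)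
    (hfrange : ∀ y, f y ∈ Set.Icc (0 : ℝ) 1)
    (hf0 : ∀ y, y ≤ Λ2 + ε0 → f y = 0)
    (hf1 : ∀ y, Λ2 + 2 * ε0 ≤ y → f y = 1) :
    ∀ x y : ℝ, 0 < y → Kfun Λ3 B f x y < Gfun Λ3 x y := by
  have B_lt : B < -1 := lt_neg_one_of_transition_bound (by linarith) (hB _ ⟨le_rfl, by linarith⟩)
  exact fun x y hy => stmt_10_general (by linarith) (hfrange y) hy
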